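/- Every Leśniewski fusion is a primitive fusion: if every y in zz satisfies P y x, and for every y with P y x there exists v in zz that overlaps y (O v y), then F zz x. -/

import Mathlib

/-- Components of `zz`: all objects that are one of some plurality fusing to a member of `zz`. -/
def Ucomp {α : Type*} (F : Set α → α → Prop) (zz : Set α) : Set α :=
  {u | ∃ z ∈ zz, ∃ yy, F yy z ∧ u ∈ yy}

/-- Parthood defined from fusion: `x` is part of `y` iff `y` fuses some plurality containing `x`. -/
def PartF {α : Type*} (F : Set α → α → Prop) (x y : α) : Prop :=
  ∃ zz, F zz y ∧ x ∈ zz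

/-- Overlap defined from the fusion-induced parthood. -/
def OvF {α : Type*} (F : Set α → α → Prop) (x y : α) : Prop :=
  ∃ z, PartF F z x ∧ PartF F z y

theorem fusion_singleton_self {α : Type*} {F : Set α → α → Prop}
    (exF : ∀ zz : Set α, zz.Nonempty → ∃ y, F zz y)
    (idF : ∀ x y : α, F {y} x → x = y) (x : α) : F {x} x := by
  obtain ⟨y, hy⟩ := exF {x} (Set.singleton_nonempty x)
  obtain rfl := idF y x hy
  exact hy

theorem fusion_pair_of_partF {α : Type*} {F : Set α → α → Prop}
    (exF : ∀ zz : Set α, zz.Nonempty → ∃ y, F zz y)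
    (extF : ∀ (zz yy uu : Set α) (x v : α),
      F zz x → F yy x → F (uu ∪ zz) v → F (uu ∪ yy) v)
    (idF : ∀ x y : α, F {y} x → x = y) {a b : α} (h : PartF F a b) :
    F ({a} ∪ {b}) b := by
  obtain ⟨ww, hw, ha⟩ := h
  refine extF ww {b} {a} b b hw (fusion_singleton_self exF idF b) ?_
  rwa [Set.union_eq_self_of_subset_left (Set.singleton_subset_iff.2 ha)]

theorem PartF.trans {α : Type*} {F : Set α → α → Prop}
    (exF : ∀ zz : Set α, zz.Nonempty → ∃ y, F zz y)
    (extF : ∀ (zz yy uu : Set α) (x v : α),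
      F zz x → F yy x → F (uu ∪ zz) v → F (uu ∪ yy) v)
    (idF : ∀ x y : α, F {y} x → x = y) {a b c : α}
    (hab : PartF F a b) (hbc : PartF F b c) : PartF F a c := by
  have hc := fusion_pair_of_partF exF extF idF hbc
  rw [Set.union_comm] at hc
  exact ⟨_, extF {b} ({a} ∪ {b}) {c} b c (fusion_singleton_self exF idF b)
    (fusion_pair_of_partF exF extF idF hab) hc, by simp⟩

theorem exists_partF_not_ovF {α : Type*} {F : Set α → α → Prop}
    (exF : ∀ zz : Set α, zz.Nonempty → ∃ y, F zz y)
    (extF : ∀ (zz yy uu : Set α) (x v : α),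
      F zz x → F yy x → F (uu ∪ zz) v → F (uu ∪ yy) v)
    (idF : ∀ x y : α, F {y} x → x = y)
    (wspF : ∀ x y : α, F ({x} ∪ {y}) y → x ≠ y →
      ∃ z ∈ Ucomp F {y}, ¬ ∃ u, F (Ucomp F {x} ∩ Ucomp F {z}) u)
    {x y : α} (h : PartF F x y) (hne : x ≠ y) : ∃ z, PartF F z y ∧ ¬ OvF F x z := by
  obtain ⟨z, ⟨y', rfl, hz⟩, hd⟩ := wspF x y (fusion_pair_of_partF exF extF idF h) hne
  refine ⟨z, hz, ?_⟩
  rintro ⟨w, hwx, hwz⟩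
  exact hd (exF _ ⟨w, ⟨x, rfl, hwx⟩, ⟨z, rfl, hwz⟩⟩)

/-- Every part of a fusion of `zz` overlaps some member of `zz`. -/
theorem exists_mem_ovF_of_partF_fusion {α : Type*} {F : Set α → α → Prop}
    (exF : ∀ zz : Set α, zz.Nonempty → ∃ y, F zz y)
    (extF : ∀ (zz yy uu : Set α) (x v : α),
      F zz x → F yy x → F (uu ∪ zz) v → F (uu ∪ yy) v)
    (idF : ∀ x y : α, F {y} x → x = y)
    (compF : ∀ (zz : Set α) (x y : α), F (zz ∪ {x}) y → F zz y →
      ∃ vv, vv ⊆ Ucomp F zz ∧ F vv x ∧ vv.Nonempty)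
    {zz : Set α} {z t : α} (ht : F zz t) (hz : PartF F z t) : ∃ m ∈ zz, OvF F m z := by
  have hzt := extF {t} zz {z} t t (fusion_singleton_self exF idF t) ht
    (fusion_pair_of_partF exF extF idF hz)
  rw [Set.union_comm] at hzt
  obtain ⟨vv, hsub, hvz, v, hv⟩ := compF zz z t hzt ht
  obtain ⟨m, hm, hvm⟩ := hsub hv
  exact ⟨m, hm, v, hvm, vv, hvz, hv⟩

theorem lesniewski_to_fusion {α : Type*} (F : Set α → α → Prop)
    (exF : ∀ zz : Set α, zz.Nonempty → ∃ y, F zz y)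
    (extF : ∀ (zz yy uu : Set α) (x v : α),
      F zz x → F yy x → F (uu ∪ zz) v → F (uu ∪ yy) v)
    (idF : ∀ x y : α, F {y} x → x = y)
    (compF : ∀ (zz : Set α) (x y : α), F (zz ∪ {x}) y → F zz y →
      ∃ vv, vv ⊆ Ucomp F zz ∧ F vv x ∧ vv.Nonempty)
    (wspF : ∀ x y : α, F ({x} ∪ {y}) y → x ≠ y →
      ∃ z ∈ Ucomp F {y}, ¬ ∃ u, F (Ucomp F {x} ∩ Ucomp F {z}) u) :
    ∀ (zz : Set α) (x : α),
      (∀ y ∈ zz, PartF F y x) → (∀ y, PartF F y x → ∃ v ∈ zz, OvF F v y) → F zz x := by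
  intro zz x hpart hov
  have self := fusion_singleton_self exF idF
  have hxx : PartF F x x := ⟨_, self x, rfl⟩
  obtain ⟨v, hv, -⟩ := hov x hxx
  obtain ⟨s, hs⟩ := exF zz ⟨v, hv⟩
  obtain ⟨t, ht⟩ := exF ({x} ∪ zz) ⟨x, Or.inl rfl⟩
  have hxt : x = t := by
    by_contra hne
    obtain ⟨z, hzt, hd⟩ :=
      exists_partF_not_ovF exF extF idF wspF ⟨_, ht, Or.inl rfl⟩ hne
    obtain ⟨m, hm, w, hwm, hwz⟩ :=
      exists_mem_ovF_of_partF_fusion exF extF idF compF ht hzt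
    have hmx : PartF F m x := by
      rcases hm with rfl | hm
      · exact hxx
      · exact hpart m hm
    exact hd ⟨w, hwm.trans exF extF idF hmx, hwz⟩
  subst hxt
  have hsx : PartF F s x := ⟨_, extF zz {s} {x} s x hs (self s) ht, Or.inr rfl⟩
  have hsx' : s = x := by
    by_contra hne
    obtain ⟨z, hzx, hd⟩ := exists_partF_not_ovF exF extF idF wspF hsx hne
    obtain ⟨m, hm, w, hwm, hwz⟩ := hov z hzx
    exact hd ⟨w, hwm.trans exF extF idF ⟨zz, hs, hm⟩, hwz⟩
  exact hsx' ▸ hs
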